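/- For every Lusztig datum a ∈ ℬ, the collection M(a) = (M_K(a))_{K∈M_n^×} is an e-BZ datum: it satisfies M_{[1,i]}(a) = 0 for all 1 ≤ i ≤ n, the inequalities (BZ-1)', and the 3-term relations (BZ-2)'. -/

import Mathlib

/-- The set of Lusztig data: `a : Π → ℤ_{≥0}`, modeled as an integer-valued function on
`ℤ × ℤ` that is nonnegative everywhere and vanishes off `Π = {(k,l) : 1 ≤ k < l ≤ n+1}`. -/
def IsLusztig (n : ℕ) (a : ℤ → ℤ → ℤ) : Prop :=
  (∀ k l : ℤ, 0 ≤ a k l) ∧ ∀ k l : ℤ, ¬(1 ≤ k ∧ k < l ∧ l ≤ (n : ℤ) + 1) → a k l = 0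

/-- The `p`-th smallest element (1-indexed) `k_p` of a Maya diagram `K`. -/
def kth (K : Finset ℕ) (p : ℕ) : ℕ := (K.sort (· ≤ ·)).getD (p - 1) 0

/-- `C = (c_{p,q})_{1 ≤ p ≤ q ≤ l}` (with `l = |K|`) is a `K`-tableau: an upper-triangular
integer matrix with `c_{p,p} = k_p`, `c_{p,q} ≤ c_{p,q+1}` and `c_{p,q} < c_{p+1,q}`. -/
def IsKTab (K : Finset ℕ) (c : ℕ → ℕ → ℤ) : Prop :=
  (∀ p : ℕ, 1 ≤ p → p ≤ K.card → c p p = (kth K p : ℤ)) ∧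
  (∀ p q : ℕ, 1 ≤ p → p ≤ q → q + 1 ≤ K.card → c p q ≤ c p (q + 1)) ∧
  (∀ p q : ℕ, 1 ≤ p → p + 1 ≤ q → q ≤ K.card → c p q < c (p + 1) q)

/-- `Σ_{1 ≤ p < q ≤ l} a_{c_{p,q}, c_{p,q}+(q−p)}`. -/
def tabSum (a : ℤ → ℤ → ℤ) (K : Finset ℕ) (c : ℕ → ℕ → ℤ) : ℤ :=
  ∑ p ∈ Finset.Icc 1 K.card, ∑ q ∈ Finset.Icc (p + 1) K.card,
    a (c p q) (c p q + ((q : ℤ) - (p : ℤ)))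

/-- `M_K(a) = −Σ_{j=1}^{l} Σ_{i=1}^{k_j−1} a_{i,k_j} + min{ tabSum over K-tableaux }`,
for `K ∈ M_n^×`, with the conventions `M_∅(a) = M_{[1,n+1]}(a) = 0`. -/
noncomputable def MK (n : ℕ) (a : ℤ → ℤ → ℤ) (K : Finset ℕ) : ℤ :=
  if K = ∅ ∨ K = Finset.Icc 1 (n + 1) then 0
  else
    -(∑ k ∈ K, ∑ s ∈ Finset.Icc 1 (k - 1), a (s : ℤ) (k : ℤ)) +
      sInf {z : ℤ | ∃ c : ℕ → ℕ → ℤ, IsKTab K c ∧ z = tabSum a K c}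
/-- A BZ datum of type `A_n`: a collection of integers `M = (M_K)` indexed by Maya diagrams
`K ⊆ [1,n+1]` (modeled as a total function on `Finset ℕ`, with the conventions
`M_∅ = M_{[1,n+1]} = 0`), satisfying the inequalities (BZ-1)' and the 3-term relations
(BZ-2)'. -/
def IsBZ (n : ℕ) (M : Finset ℕ → ℤ) : Prop :=
  M ∅ = 0 ∧ M (Finset.Icc 1 (n + 1)) = 0 ∧
  (∀ i j : ℕ, ∀ K : Finset ℕ, 1 ≤ i → i ≤ n + 1 → 1 ≤ j → j ≤ n + 1 → i ≠ j →
    K ⊆ Finset.Icc 1 (n + 1) → i ∉ K → j ∉ K →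
    M (insert i K) + M (insert j K) ≤ M (insert i (insert j K)) + M K) ∧
  (∀ i j k : ℕ, ∀ K : Finset ℕ, 1 ≤ i → i < j → j < k → k ≤ n + 1 →
    K ⊆ Finset.Icc 1 (n + 1) → i ∉ K → j ∉ K → k ∉ K →
    M (insert i (insert k K)) + M (insert j K) =
      min (M (insert i (insert j K)) + M (insert k K))
        (M (insert j (insert k K)) + M (insert i K)))

/-- A `w₀`-BZ datum: a BZ datum with `M_{[n−i+2,n+1]} = 0` for all `1 ≤ i ≤ n`. -/
def IsW0BZ (n : ℕ) (M : Finset ℕ → ℤ) : Prop :=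
  IsBZ n M ∧ ∀ i : ℕ, 1 ≤ i → i ≤ n → M (Finset.Icc (n - i + 2) (n + 1)) = 0

/-- An `e`-BZ datum: a BZ datum with `M_{[1,i]} = 0` for all `1 ≤ i ≤ n`. -/
def IsEBZ (n : ℕ) (M : Finset ℕ → ℤ) : Prop :=
  IsBZ n M ∧ ∀ i : ℕ, 1 ≤ i → i ≤ n → M (Finset.Icc 1 i) = 0

/-!
The numbers `M_K(a)` are tropicalized flag minors. Weighted partial sums of the constant row `1`
form a matrix over `ℤ[X]` whose minor on the first `|K|` rows and the columns `K` is the generating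
polynomial `∑ X ^ tabSum a K c` over the `K`-tableaux `c`: subtracting adjacent columns peels the
diagonal off the tableaux. As its trailing coefficient is positive, the minimum of `tabSum` is its
order of vanishing at `X = 0`, and these orders turn products into sums and sums into minima.

The Desnanot–Jacobi identity gives the three-term Plücker relation for flag minors, which is free of
signs and hence tropicalizes to (BZ-2)'. The same identity expresses the product on the right of
(BZ-1)' through flag minors and minors whose last row is shifted down by one; the latter vanish at
`X = 0` to at least the order of the flag minor on the same columns, and (BZ-1)' follows.
-/

section TrailingCoeff

open Polynomial

variable {R : Type*} [Ring R]

theorem natTrailingDegree_eq_of_coeff {p : R[X]} {n : ℕ} (hlt : ∀ m < n, p.coeff m = 0)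
    (hn : p.coeff n ≠ 0) : p.natTrailingDegree = n :=
  le_antisymm (natTrailingDegree_le_of_ne_zero hn)
    (le_natTrailingDegree (fun h => hn (by simp [h])) hlt)

theorem X_pow_natTrailingDegree_dvd (p : R[X]) : X ^ p.natTrailingDegree ∣ p :=
  X_pow_dvd_iff.2 fun _ => coeff_eq_zero_of_lt_natTrailingDegree

variable [LinearOrder R]

theorem ne_zero_of_trailingCoeff_pos {p : R[X]} (hp : 0 < p.trailingCoeff) : p ≠ 0 :=
  trailingCoeff_nonzero_iff_nonzero.1 hp.ne'

theorem coeff_nonneg_of_le_natTrailingDegree {p : R[X]} (hp : 0 < p.trailingCoeff) {n : ℕ}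
    (hn : n ≤ p.natTrailingDegree) : 0 ≤ p.coeff n := by
  rcases hn.eq_or_lt with rfl | hn
  · exact hp.le
  · exact (coeff_eq_zero_of_lt_natTrailingDegree hn).ge

variable [IsStrictOrderedRing R]

theorem trailingCoeff_X_pow_pos (n : ℕ) : 0 < (X ^ n : R[X]).trailingCoeff := by
  simp [trailingCoeff]

theorem trailingCoeff_mul_pos {p q : R[X]} (hp : 0 < p.trailingCoeff)
    (hq : 0 < q.trailingCoeff) : 0 < (p * q).trailingCoeff := by
  rw [trailingCoeff_mul]
  exact mul_pos hp hq

theorem natTrailingDegree_mul_of_trailingCoeff_pos {p q : R[X]} (hp : 0 < p.trailingCoeff)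
    (hq : 0 < q.trailingCoeff) :
    (p * q).natTrailingDegree = p.natTrailingDegree + q.natTrailingDegree :=
  natTrailingDegree_mul (ne_zero_of_trailingCoeff_pos hp) (ne_zero_of_trailingCoeff_pos hq)

theorem coeff_add_min_natTrailingDegree_pos {p q : R[X]} (hp : 0 < p.trailingCoeff)
    (hq : 0 < q.trailingCoeff) :
    0 < (p + q).coeff (min p.natTrailingDegree q.natTrailingDegree) := by
  rw [coeff_add]
  rcases le_total p.natTrailingDegree q.natTrailingDegree with h | h
  · rw [min_eq_left h]
    exact add_pos_of_pos_of_nonneg hp (coeff_nonneg_of_le_natTrailingDegree hq h)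
  · rw [min_eq_right h]
    exact add_pos_of_nonneg_of_pos (coeff_nonneg_of_le_natTrailingDegree hp h) hq

theorem natTrailingDegree_add_of_trailingCoeff_pos {p q : R[X]} (hp : 0 < p.trailingCoeff)
    (hq : 0 < q.trailingCoeff) :
    (p + q).natTrailingDegree = min p.natTrailingDegree q.natTrailingDegree := by
  refine natTrailingDegree_eq_of_coeff (fun m hm => ?_)
    (coeff_add_min_natTrailingDegree_pos hp hq).ne'
  rw [lt_min_iff] at hm
  rw [coeff_add, coeff_eq_zero_of_lt_natTrailingDegree hm.1,
    coeff_eq_zero_of_lt_natTrailingDegree hm.2, add_zero]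

theorem trailingCoeff_add_pos {p q : R[X]} (hp : 0 < p.trailingCoeff)
    (hq : 0 < q.trailingCoeff) : 0 < (p + q).trailingCoeff := by
  rw [trailingCoeff, natTrailingDegree_add_of_trailingCoeff_pos hp hq]
  exact coeff_add_min_natTrailingDegree_pos hp hq

theorem trailingCoeff_sum_pos {ι : Type*} {s : Finset ι} (hs : s.Nonempty) {p : ι → R[X]}
    (hp : ∀ i ∈ s, 0 < (p i).trailingCoeff) : 0 < (∑ i ∈ s, p i).trailingCoeff :=
  Finset.sum_induction_nonempty p (fun q => 0 < q.trailingCoeff)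
    (fun _ _ => trailingCoeff_add_pos) hs hp

theorem natTrailingDegree_sum_of_trailingCoeff_pos {ι : Type*} {s : Finset ι} (hs : s.Nonempty)
    {p : ι → R[X]} (hp : ∀ i ∈ s, 0 < (p i).trailingCoeff) :
    (∑ i ∈ s, p i).natTrailingDegree = s.inf' hs fun i => (p i).natTrailingDegree := by
  induction hs using Finset.Nonempty.cons_induction with
  | singleton i => simp
  | cons i s hi hs ih =>
    rw [Finset.forall_mem_cons] at hp
    rw [Finset.sum_cons, Finset.inf'_cons hs, ← ih hp.2]
    exact natTrailingDegree_add_of_trailingCoeff_pos hp.1 (trailingCoeff_sum_pos hs hp.2)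

end TrailingCoeff

section DesnanotJacobi

open Matrix

variable {m n : Type*} {l : ℕ}

/-- The Schur complement in `B` of the block with rows `ρ` and columns `f`, as a matrix with the
same index types as `B`. It vanishes on the rows `ρ`, and its entry at `(r, x)` is the quotient of
the minor bordered by row `r` and column `x` by the minor on `(ρ, f)`. -/
noncomputable def schurComplement {F : Type*} [Field F] (B : Matrix m n F) (ρ : Fin l → m)
    (f : Fin l → n) : Matrix m n F :=
  B - B.submatrix id f * (B.submatrix ρ f)⁻¹ * B.submatrix ρ id

theorem det_submatrix_sumElim {F : Type*} [Field F] {κ : Type*} [Fintype κ] [DecidableEq κ]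
    (B : Matrix m n F) (ρ : Fin l → m) (f : Fin l → n) (h : (B.submatrix ρ f).det ≠ 0)
    (s : κ → m) (x : κ → n) :
    (B.submatrix (Sum.elim ρ s) (Sum.elim f x)).det =
      (B.submatrix ρ f).det * ((schurComplement B ρ f).submatrix s x).det := by
  let := invertibleOfIsUnitDet (B.submatrix ρ f) (isUnit_iff_ne_zero.2 h)
  have hblocks : B.submatrix (Sum.elim ρ s) (Sum.elim f x) =
      fromBlocks (B.submatrix ρ f) (B.submatrix ρ x) (B.submatrix s f) (B.submatrix s x) := by
    ext (i | i) (j | j) <;> rfl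
  rw [hblocks, det_fromBlocks₁₁, invOf_eq_nonsing_inv]
  rfl

theorem det_mul_det_submatrix_sumElim_of_field {F : Type*} [Field F] (B : Matrix m n F)
    (ρ : Fin l → m) (f : Fin l → n) (h : (B.submatrix ρ f).det ≠ 0) (r s : m) (x y : n) :
    (B.submatrix ρ f).det * (B.submatrix (Sum.elim ρ ![r, s]) (Sum.elim f ![x, y])).det =
      (B.submatrix (Sum.elim ρ ![r]) (Sum.elim f ![x])).det *
          (B.submatrix (Sum.elim ρ ![s]) (Sum.elim f ![y])).det -
        (B.submatrix (Sum.elim ρ ![r]) (Sum.elim f ![y])).det *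
          (B.submatrix (Sum.elim ρ ![s]) (Sum.elim f ![x])).det := by
  simp only [det_submatrix_sumElim B ρ f h, det_fin_two, det_fin_one, submatrix_apply,
    cons_val_zero, cons_val_one]
  ring

theorem det_mul_det_submatrix_sumElim {R : Type*} [CommRing R] [IsDomain R] (B : Matrix m n R)
    (ρ : Fin l → m) (f : Fin l → n) (h : (B.submatrix ρ f).det ≠ 0) (r s : m) (x y : n) :
    (B.submatrix ρ f).det * (B.submatrix (Sum.elim ρ ![r, s]) (Sum.elim f ![x, y])).det =
      (B.submatrix (Sum.elim ρ ![r]) (Sum.elim f ![x])).det *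
          (B.submatrix (Sum.elim ρ ![s]) (Sum.elim f ![y])).det -
        (B.submatrix (Sum.elim ρ ![r]) (Sum.elim f ![y])).det *
          (B.submatrix (Sum.elim ρ ![s]) (Sum.elim f ![x])).det := by
  let φ := algebraMap R (FractionRing R)
  have hφ : Function.Injective φ := IsFractionRing.injective R (FractionRing R)
  have map_minor {ι : Type} [Fintype ι] [DecidableEq ι] (σ : ι → m) (g : ι → n) :
      φ (B.submatrix σ g).det = ((B.map φ).submatrix σ g).det := φ.map_det _
  apply hφ
  simp only [map_mul, map_sub, map_minor]
  apply det_mul_det_submatrix_sumElim_of_field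
  rwa [← map_minor, map_ne_zero_iff φ hφ]

end DesnanotJacobi

section TupleSign

open Matrix

variable {l : ℕ}

/-- The sign of the permutation sorting `g` (zero if `g` is not injective), read off from the
Vandermonde determinant of `g`. -/
noncomputable def tupleSign (g : Fin l → ℕ) : ℤ :=
  SignType.sign (vandermonde fun i => (g i : ℤ)).det

theorem tupleSign_comp_perm (g : Fin l → ℕ) (σ : Equiv.Perm (Fin l)) :
    tupleSign (g ∘ σ) = Equiv.Perm.sign σ * tupleSign g := by
  have hdet : (vandermonde fun i => ((g ∘ σ) i : ℤ)).det =
      Equiv.Perm.sign σ * (vandermonde fun i => (g i : ℤ)).det := by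
    rw [← Int.cast_id (n := (Equiv.Perm.sign σ : ℤ)), ← det_permute]
    rfl
  rw [tupleSign, hdet, sign_mul, SignType.coe_mul, tupleSign]
  rcases Int.units_eq_one_or (Equiv.Perm.sign σ) with h | h <;> simp [h]

theorem tupleSign_of_strictMono {g : Fin l → ℕ} (hg : StrictMono g) : tupleSign g = 1 := by
  have hpos : 0 < (vandermonde fun i => (g i : ℤ)).det := by
    rw [det_vandermonde]
    refine Finset.prod_pos fun i _ => Finset.prod_pos fun j hj => ?_
    have := hg (Finset.mem_Ioi.1 hj)
    lia
  simp [tupleSign, hpos]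

theorem tupleSign_vecCons (x : ℕ) (g : Fin l → ℕ) :
    tupleSign (vecCons x g) = SignType.sign (∏ i, ((g i : ℤ) - x)) * tupleSign g := by
  have hdet : (vandermonde fun i => ((vecCons x g) i : ℤ)).det =
      (∏ i, ((g i : ℤ) - x)) * (vandermonde fun i => (g i : ℤ)).det := by
    simp [det_vandermonde, Fin.prod_univ_succ, Fin.prod_Ioi_succ]
  simp [tupleSign, hdet, sign_mul]

theorem tupleSign_vecCons_vecCons_of_lt {f : Fin l → ℕ} (hf : StrictMono f) {x y : ℕ}
    (hxy : x < y) :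
    tupleSign (vecCons x (vecCons y f)) =
      tupleSign (vecCons x f) * tupleSign (vecCons y f) := by
  have hsign : SignType.sign ((y : ℤ) - x) = 1 := sign_pos (by lia)
  simp [tupleSign_vecCons, tupleSign_of_strictMono hf, Fin.prod_univ_succ, sign_mul, hsign]

theorem tupleSign_eq_sign_sort {g : Fin l → ℕ} (hg : Function.Injective g) :
    tupleSign g = Equiv.Perm.sign (Tuple.sort g) := by
  have hsort : StrictMono (g ∘ Tuple.sort g) :=
    (Tuple.monotone_sort g).strictMono_of_injective (hg.comp (Equiv.injective _))
  have h := tupleSign_comp_perm g (Tuple.sort g)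
  rw [tupleSign_of_strictMono hsort] at h
  rcases Int.units_eq_one_or (Equiv.Perm.sign (Tuple.sort g)) with hs | hs <;>
    · simp only [hs, Units.val_one, Units.val_neg] at h ⊢
      lia

end TupleSign

section Minor

open Matrix

variable {R : Type*} [CommRing R] {l : ℕ}

theorem kth_add_one (K : Finset ℕ) (hK : K.card = l) (i : Fin l) :
    kth K (i + 1) = K.orderEmbOfFin hK i := by
  rw [Finset.orderEmbOfFin_apply, kth, Nat.add_sub_cancel, List.getD_eq_getElem _ _ (by simp [hK])]
  rfl

/-- The minor of `B` with rows `S` and columns `K`, both listed increasingly. It is meant for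
`S.card = K.card`; the enumeration `kth` keeps the definition total. -/
def minor (B : Matrix ℕ ℕ R) (S K : Finset ℕ) : R :=
  (B.submatrix (fun i : Fin K.card => kth S (i + 1)) fun j : Fin K.card => kth K (j + 1)).det

theorem minor_eq_det (B : Matrix ℕ ℕ R) {S K : Finset ℕ} (hS : S.card = l) (hK : K.card = l) :
    minor B S K = (B.submatrix (S.orderEmbOfFin hS) (K.orderEmbOfFin hK)).det := by
  subst hK
  simp only [minor, kth_add_one S hS, kth_add_one K rfl]

theorem orderEmbOfFin_eq_comp_sort {α : Type*} [LinearOrder α] {g : Fin l → α}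
    (hg : Function.Injective g) {K : Finset α} (hK : K.card = l) (hgK : ∀ i, g i ∈ K) :
    K.orderEmbOfFin hK = g ∘ Tuple.sort g :=
  (Finset.orderEmbOfFin_unique hK (fun _ => hgK _)
    ((Tuple.monotone_sort g).strictMono_of_injective (hg.comp (Equiv.injective _)))).symm

theorem minor_eq_tupleSign_mul_det (B : Matrix ℕ ℕ R) {S K : Finset ℕ} {ρ g : Fin l → ℕ}
    (hρ : Function.Injective ρ) (hg : Function.Injective g) (hS : S.card = l) (hK : K.card = l)
    (hρS : ∀ i, ρ i ∈ S) (hgK : ∀ i, g i ∈ K) :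
    minor B S K = ((tupleSign ρ * tupleSign g : ℤ) : R) * (B.submatrix ρ g).det := by
  rw [minor_eq_det B hS hK, orderEmbOfFin_eq_comp_sort hρ hS hρS,
    orderEmbOfFin_eq_comp_sort hg hK hgK, tupleSign_eq_sign_sort hρ,
    tupleSign_eq_sign_sort hg, Int.cast_mul, mul_assoc, ← det_permute', ← det_permute]
  rfl

theorem exists_equiv_vecCons_comp_eq_sumElim (α : Type*) (l : ℕ) :
    ∃ e : Fin l ⊕ Fin 1 ≃ Fin (l + 1), ∀ (g : Fin l → α) (x : α),
      vecCons x g ∘ e = Sum.elim g ![x] := by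
  refine ⟨(Equiv.sumComm _ _).trans (finSumFinEquiv.trans (finCongr (add_comm 1 l))),
    fun g x => ?_⟩
  ext (i | i)
  · have hsucc : Fin.cast (add_comm 1 l) (Fin.natAdd 1 i) = i.succ := by
      ext
      simp
    simp [hsucc]
  · fin_cases i
    rfl

theorem exists_equiv_vecCons_vecCons_comp_eq_sumElim (α : Type*) (l : ℕ) :
    ∃ e : Fin l ⊕ Fin 2 ≃ Fin (l + 2), ∀ (g : Fin l → α) (x y : α),
      vecCons x (vecCons y g) ∘ e = Sum.elim g ![x, y] := by
  refine ⟨(Equiv.sumComm _ _).trans (finSumFinEquiv.trans (finCongr (add_comm 2 l))),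
    fun g x y => ?_⟩
  ext (i | i)
  · have hsucc : Fin.cast (add_comm 2 l) (Fin.natAdd 2 i) = i.succ.succ := by
      ext
      simp only [Fin.val_cast, Fin.val_natAdd, Fin.val_succ]
      ring
    simp [hsucc]
  · fin_cases i <;> rfl

theorem vecCons_injective_iff {α : Type*} {x : α} {g : Fin l → α} :
    Function.Injective (vecCons x g) ↔ (∀ i, g i ≠ x) ∧ Function.Injective g := by
  rw [vecCons, Fin.cons_injective_iff, Set.mem_range, not_exists]

theorem vecCons_mem_insert {α : Type*} [DecidableEq α] {K : Finset α} {x : α} {g : Fin l → α}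
    (hg : ∀ i, g i ∈ K) (i : Fin (l + 1)) :
    vecCons x g i ∈ insert x K :=
  Fin.cases (by simp) (fun j => by simp [hg j]) i

variable {S K : Finset ℕ}

theorem minor_insert (B : Matrix ℕ ℕ R) (hS : S.card = l) (hK : K.card = l) {r x : ℕ}
    (hr : r ∉ S) (hx : x ∉ K) :
    minor B (insert r S) (insert x K) =
      ((tupleSign (vecCons r (S.orderEmbOfFin hS)) *
          tupleSign (vecCons x (K.orderEmbOfFin hK)) : ℤ) : R) *
        (B.submatrix (Sum.elim (S.orderEmbOfFin hS) ![r])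
          (Sum.elim (K.orderEmbOfFin hK) ![x])).det := by
  obtain ⟨e, he⟩ := exists_equiv_vecCons_comp_eq_sumElim ℕ l
  have inj {T : Finset ℕ} (hT : T.card = l) {z : ℕ} (hz : z ∉ T) :
      Function.Injective (vecCons z (T.orderEmbOfFin hT)) :=
    vecCons_injective_iff.2 ⟨fun i h => hz (h ▸ T.orderEmbOfFin_mem hT i),
      (T.orderEmbOfFin hT).injective⟩
  rw [minor_eq_tupleSign_mul_det B (inj hS hr) (inj hK hx) (by simp [hr, hS]) (by simp [hx, hK])
    (vecCons_mem_insert (S.orderEmbOfFin_mem hS)) (vecCons_mem_insert (K.orderEmbOfFin_mem hK)),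
    ← det_submatrix_equiv_self e, submatrix_submatrix, he, he]

theorem minor_insert_insert (B : Matrix ℕ ℕ R) (hS : S.card = l) (hK : K.card = l) {r s x y : ℕ}
    (hr : r ∉ S) (hs : s ∉ S) (hrs : r < s) (hx : x ∉ K) (hy : y ∉ K) (hxy : x < y) :
    minor B (insert r (insert s S)) (insert x (insert y K)) =
      ((tupleSign (vecCons r (S.orderEmbOfFin hS)) * tupleSign (vecCons s (S.orderEmbOfFin hS)) *
          (tupleSign (vecCons x (K.orderEmbOfFin hK)) *
            tupleSign (vecCons y (K.orderEmbOfFin hK))) : ℤ) : R) *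
        (B.submatrix (Sum.elim (S.orderEmbOfFin hS) ![r, s])
          (Sum.elim (K.orderEmbOfFin hK) ![x, y])).det := by
  obtain ⟨e, he⟩ := exists_equiv_vecCons_vecCons_comp_eq_sumElim ℕ l
  have card_eq {T : Finset ℕ} (hT : T.card = l) {z w : ℕ} (hz : z ∉ T) (hw : w ∉ T) (hzw : z < w) :
      (insert z (insert w T)).card = l + 2 := by
    simp [hz, hw, hzw.ne, hT]
  have inj {T : Finset ℕ} (hT : T.card = l) {z w : ℕ} (hz : z ∉ T) (hw : w ∉ T) (hzw : z < w) :
      Function.Injective (vecCons z (vecCons w (T.orderEmbOfFin hT))) := by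
    have hmem := T.orderEmbOfFin_mem hT
    simp only [vecCons_injective_iff, Fin.forall_fin_succ, cons_val_zero, cons_val_succ]
    exact ⟨⟨hzw.ne', fun i h => hz (h ▸ hmem i)⟩, fun i h => hw (h ▸ hmem i),
      (T.orderEmbOfFin hT).injective⟩
  rw [minor_eq_tupleSign_mul_det B (inj hS hr hs hrs) (inj hK hx hy hxy) (card_eq hS hr hs hrs)
    (card_eq hK hx hy hxy) (vecCons_mem_insert (vecCons_mem_insert (S.orderEmbOfFin_mem hS)))
    (vecCons_mem_insert (vecCons_mem_insert (K.orderEmbOfFin_mem hK))),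
    tupleSign_vecCons_vecCons_of_lt (S.orderEmbOfFin hS).strictMono hrs,
    tupleSign_vecCons_vecCons_of_lt (K.orderEmbOfFin hK).strictMono hxy,
    ← det_submatrix_equiv_self e, submatrix_submatrix, he, he]

theorem minor_mul_minor_insert_insert [IsDomain R] (B : Matrix ℕ ℕ R) (hSK : S.card = K.card)
    (h : minor B S K ≠ 0) {r s x y : ℕ} (hr : r ∉ S) (hs : s ∉ S) (hrs : r < s) (hx : x ∉ K)
    (hy : y ∉ K) (hxy : x < y) :
    minor B S K * minor B (insert r (insert s S)) (insert x (insert y K)) =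
      minor B (insert r S) (insert x K) * minor B (insert s S) (insert y K) -
        minor B (insert r S) (insert y K) * minor B (insert s S) (insert x K) := by
  rw [minor_eq_det B hSK rfl] at h ⊢
  rw [minor_insert_insert B hSK rfl hr hs hrs hx hy hxy, minor_insert B hSK rfl hr hx,
    minor_insert B hSK rfl hs hy, minor_insert B hSK rfl hr hy, minor_insert B hSK rfl hs hx]
  push_cast
  linear_combination (tupleSign (vecCons r (S.orderEmbOfFin hSK)) : R) *
    tupleSign (vecCons s (S.orderEmbOfFin hSK)) * tupleSign (vecCons x (K.orderEmbOfFin rfl)) *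
    tupleSign (vecCons y (K.orderEmbOfFin rfl)) *
    det_mul_det_submatrix_sumElim B _ _ h r s x y

end Minor

section FlagMinor

variable {R : Type*} [CommRing R]

/-- The flag minor of `B` on the columns `K`: its rows are the first `|K|` ones. -/
def flagMinor (B : Matrix ℕ ℕ R) (K : Finset ℕ) : R :=
  minor B (Finset.range K.card) K

/-- The minor of `B` on the columns `K` whose rows are the first `|K|` ones with the last of them
replaced by its successor. -/
def gapMinor (B : Matrix ℕ ℕ R) (K : Finset ℕ) : R :=
  minor B (insert K.card (Finset.range (K.card - 1))) K

variable [IsDomain R] (B : Matrix ℕ ℕ R) {K : Finset ℕ}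

theorem flagMinor_mul_flagMinor_insert_insert (h : flagMinor B K ≠ 0) {x y : ℕ} (hx : x ∉ K)
    (hy : y ∉ K) (hxy : x < y) :
    flagMinor B K * flagMinor B (insert x (insert y K)) =
      flagMinor B (insert x K) * gapMinor B (insert y K) -
        flagMinor B (insert y K) * gapMinor B (insert x K) := by
  have hxyK : x ∉ insert y K := by simp [hx, hxy.ne]
  have hDJ := minor_mul_minor_insert_insert B (Finset.card_range K.card) h
    (r := K.card) (s := K.card + 1) (by simp) (by simp) (by simp) hx hy hxy
  rw [Finset.insert_comm, ← Finset.range_add_one, ← Finset.range_add_one] at hDJ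
  simpa only [flagMinor, gapMinor, Finset.card_insert_of_notMem, hx, hy, hxyK,
    not_false_eq_true, Nat.add_sub_cancel] using hDJ

theorem flagMinor_three_term (h : flagMinor B K ≠ 0) {i j k : ℕ} (hi : i ∉ K) (hj : j ∉ K)
    (hk : k ∉ K) (hij : i < j) (hjk : j < k) :
    flagMinor B (insert i (insert k K)) * flagMinor B (insert j K) =
      flagMinor B (insert i (insert j K)) * flagMinor B (insert k K) +
        flagMinor B (insert j (insert k K)) * flagMinor B (insert i K) := by
  have h_ij := flagMinor_mul_flagMinor_insert_insert B h hi hj hij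
  have h_jk := flagMinor_mul_flagMinor_insert_insert B h hj hk hjk
  have h_ik := flagMinor_mul_flagMinor_insert_insert B h hi hk (hij.trans hjk)
  apply mul_left_cancel₀ h
  linear_combination flagMinor B (insert j K) * h_ik - flagMinor B (insert k K) * h_ij -
    flagMinor B (insert i K) * h_jk

end FlagMinor

section TableauMatrix

open Matrix

variable {R : Type*} [CommRing R] {l : ℕ}

theorem det_eq_det_sub_of_row_zero_eq_one (A : Matrix (Fin (l + 1)) (Fin (l + 1)) R)
    (h : ∀ j, A 0 j = 1) :
    A.det = (of fun i j : Fin l => A i.succ j.succ - A i.succ j.castSucc).det := by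
  let D : Matrix (Fin (l + 1)) (Fin (l + 1)) R :=
    of fun i => vecCons (A i 0) fun j => A i j.succ - A i j.castSucc
  have hAD : A.det = D.det :=
    det_eq_of_forall_col_eq_smul_add_pred (fun _ => 1) (by simp [D]) (by simp [D])
  have hD : ∀ j : Fin l, D 0 j.succ = 0 := by simp [D, h]
  rw [hAD, det_succ_row_zero, Fin.sum_univ_succ]
  simp only [hD, mul_zero, zero_mul, Finset.sum_const_zero, add_zero]
  simp only [D, of_apply, cons_val_zero, h, Fin.val_zero, pow_zero, one_mul]
  rfl

theorem det_of_sum_mul {ι α : Type*} [Fintype ι] [DecidableEq ι] (s : ι → Finset α)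
    (u : α → R) (M : Matrix ι α R) :
    (of fun i j => ∑ x ∈ s j, u x * M i x).det =
      ∑ g ∈ Fintype.piFinset s, (∏ j, u (g j)) * (M.submatrix id g).det := by
  have hrows : (of fun i j => ∑ x ∈ s j, u x * M i x)ᵀ =
      fun j => ∑ x ∈ s j, fun i => u x * M i x := by
    ext j i
    simp
  rw [← det_transpose, hrows]
  refine (detRowAlternating.toMultilinearMap.map_sum_finset (fun _ x i => u x * M i x) s).trans
    (Finset.sum_congr rfl fun g _ => ?_)
  rw [← det_transpose (M.submatrix id g)]
  exact det_mul_column (fun j => u (g j)) (M.submatrix id g)ᵀ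

/-- The matrix whose flag minors enumerate tableaux, where an entry `x` on the `d`-th
superdiagonal has weight `w (d - 1) x`: iterated weighted partial sums of the constant row `1`. -/
def tableauMatrix (w : ℕ → ℕ → R) : Matrix ℕ ℕ R := of fun r y => entry w r y
where
  /-- The entry of `tableauMatrix w` in row `r` and column `y`. -/
  entry (w : ℕ → ℕ → R) : ℕ → ℕ → R
    | 0, _ => 1
    | r + 1, y => ∑ x ∈ Finset.range y, w 0 x * entry (fun d => w (d + 1)) r x

theorem tableauMatrix_zero (w : ℕ → ℕ → R) (y : ℕ) : tableauMatrix w 0 y = 1 := rfl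

theorem tableauMatrix_succ_sub (w : ℕ → ℕ → R) (r : ℕ) {y z : ℕ} (h : y ≤ z) :
    tableauMatrix w (r + 1) z - tableauMatrix w (r + 1) y =
      ∑ x ∈ Finset.Ico y z, w 0 x * tableauMatrix (fun d => w (d + 1)) r x :=
  (Finset.sum_Ico_eq_sub _ h).symm

/-- The sequences `g` interlacing with `f`: `f 0 ≤ g 0 < f 1 ≤ g 1 < f 2 ≤ ⋯`. These are the
possible first superdiagonals of a tableau with diagonal `f`. -/
def interlacing (f : Fin (l + 1) → ℕ) : Finset (Fin l → ℕ) :=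
  Fintype.piFinset fun p => Finset.Ico (f p.castSucc) (f p.succ)

theorem mem_interlacing {f : Fin (l + 1) → ℕ} {g : Fin l → ℕ} :
    g ∈ interlacing f ↔ ∀ p, f p.castSucc ≤ g p ∧ g p < f p.succ := by
  simp [interlacing]

theorem det_tableauMatrix_submatrix_vecCons_zero (w : ℕ → ℕ → R) (ρ : Fin l → ℕ)
    {f : Fin (l + 1) → ℕ} (hf : Monotone f) :
    ((tableauMatrix w).submatrix (vecCons 0 fun i => ρ i + 1) f).det =
      ∑ g ∈ interlacing f, (∏ p, w 0 (g p)) *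
        ((tableauMatrix fun d => w (d + 1)).submatrix ρ g).det := by
  rw [det_eq_det_sub_of_row_zero_eq_one _ fun j => tableauMatrix_zero w (f j)]
  simp only [submatrix_apply, cons_val_succ,
    tableauMatrix_succ_sub w _ (hf (Fin.castSucc_lt_succ).le)]
  exact det_of_sum_mul _ (w 0) ((tableauMatrix fun d => w (d + 1)).submatrix ρ id)

theorem strictMono_of_mem_interlacing {f : Fin (l + 1) → ℕ} (hf : Monotone f) {g : Fin l → ℕ}
    (hg : g ∈ interlacing f) : StrictMono g := by
  rw [mem_interlacing] at hg
  intro p q hpq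
  have hle : p.succ ≤ q.castSucc := Fin.succ_le_castSucc_iff.2 hpq
  exact (hg p).2.trans_le ((hf hle).trans (hg q).1)

theorem interlacing_nonempty {f : Fin (l + 1) → ℕ} (hf : StrictMono f) :
    (interlacing f).Nonempty :=
  ⟨fun p => f p.castSucc, mem_interlacing.2 fun p => ⟨le_rfl, hf p.castSucc_lt_succ⟩⟩

end TableauMatrix

section TableauPolynomial

open Matrix Polynomial

variable {l : ℕ} (a : ℤ → ℤ → ℤ)

/-- The datum `(x, y) ↦ a x (y + 1)`, which weighs what is left of a tableau once its diagonal is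
removed. -/
def shiftDatum : ℤ → ℤ → ℤ := fun x y => a x (y + 1)

/-- The monomial weight of an entry `x` on the `(d + 1)`-st superdiagonal of a tableau. Exponents
are truncated at `0`, which is harmless for nonnegative `a`. -/
noncomputable def datumWeight (d x : ℕ) : ℤ[X] := X ^ (a x (x + (d + 1))).toNat

theorem datumWeight_shiftDatum :
    datumWeight (shiftDatum a) = fun d => datumWeight a (d + 1) := by
  ext1 d
  ext1 x
  simp only [datumWeight, shiftDatum, Nat.cast_succ, add_assoc]

/-- The exponent contributed by the first superdiagonal `g` of a tableau. -/
def diagonalDegree (g : Fin l → ℕ) : ℕ := ∑ p, (a (g p) (g p + 1)).toNat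

theorem prod_datumWeight_zero (g : Fin l → ℕ) :
    ∏ p, datumWeight a 0 (g p) = X ^ diagonalDegree a g := by
  simp only [datumWeight, diagonalDegree, Finset.prod_pow_eq_pow_sum, Nat.cast_zero, zero_add]

/-- The generating polynomial of the tableaux with diagonal `f`, weighted by `a`. -/
noncomputable def tableauPoly (f : Fin l → ℕ) : ℤ[X] :=
  ((tableauMatrix (datumWeight a)).submatrix Fin.val f).det

/-- The row indices `0, 1, …, l - 2, l` of a gap minor. -/
def gapRows (l : ℕ) (i : Fin l) : ℕ := if i + 1 < l then i else i + 1

/-- The determinant defining `tableauPoly`, with its last row replaced by the next one. -/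
noncomputable def gapPoly (f : Fin l → ℕ) : ℤ[X] :=
  ((tableauMatrix (datumWeight a)).submatrix (gapRows l) f).det

theorem gapRows_succ_succ (l : ℕ) :
    gapRows (l + 2) = vecCons 0 fun i => gapRows (l + 1) i + 1 := by
  ext i
  cases i using Fin.cases with
  | zero => simp [gapRows]
  | succ i => simp [gapRows, apply_ite (· + 1)]

theorem tableauPoly_succ {f : Fin (l + 1) → ℕ} (hf : Monotone f) :
    tableauPoly a f =
      ∑ g ∈ interlacing f, X ^ diagonalDegree a g * tableauPoly (shiftDatum a) g := by
  have hrows : (Fin.val : Fin (l + 1) → ℕ) = vecCons 0 fun i : Fin l => (i : ℕ) + 1 := by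
    ext i
    cases i using Fin.cases <;> simp
  rw [tableauPoly, hrows, det_tableauMatrix_submatrix_vecCons_zero _ _ hf]
  simp only [prod_datumWeight_zero, tableauPoly, datumWeight_shiftDatum]

theorem gapPoly_succ_succ {f : Fin (l + 2) → ℕ} (hf : Monotone f) :
    gapPoly a f = ∑ g ∈ interlacing f, X ^ diagonalDegree a g * gapPoly (shiftDatum a) g := by
  rw [gapPoly, gapRows_succ_succ, det_tableauMatrix_submatrix_vecCons_zero _ _ hf]
  simp only [prod_datumWeight_zero, gapPoly, datumWeight_shiftDatum]

theorem trailingCoeff_tableauPoly_pos {f : Fin l → ℕ} (hf : StrictMono f) :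
    0 < (tableauPoly a f).trailingCoeff := by
  induction l generalizing a with
  | zero => simpa [tableauPoly] using trailingCoeff_X_pow_pos (R := ℤ) 0
  | succ l ih =>
    rw [tableauPoly_succ a hf.monotone]
    exact trailingCoeff_sum_pos (interlacing_nonempty hf) fun g hg =>
      trailingCoeff_mul_pos (trailingCoeff_X_pow_pos _)
        (ih (shiftDatum a) (strictMono_of_mem_interlacing hf.monotone hg))

theorem natTrailingDegree_tableauPoly_succ {f : Fin (l + 1) → ℕ} (hf : StrictMono f) :
    (tableauPoly a f).natTrailingDegree =
      (interlacing f).inf' (interlacing_nonempty hf) fun g =>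
        diagonalDegree a g + (tableauPoly (shiftDatum a) g).natTrailingDegree := by
  have hpos : ∀ g ∈ interlacing f, 0 < (tableauPoly (shiftDatum a) g).trailingCoeff :=
    fun g hg => trailingCoeff_tableauPoly_pos _ (strictMono_of_mem_interlacing hf.monotone hg)
  rw [tableauPoly_succ a hf.monotone,
    natTrailingDegree_sum_of_trailingCoeff_pos (interlacing_nonempty hf) fun g hg =>
      trailingCoeff_mul_pos (trailingCoeff_X_pow_pos _) (hpos g hg)]
  refine Finset.inf'_congr _ rfl fun g hg => ?_
  rw [natTrailingDegree_mul_of_trailingCoeff_pos (trailingCoeff_X_pow_pos _) (hpos g hg),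
    natTrailingDegree_X_pow]

theorem X_pow_natTrailingDegree_tableauPoly_dvd_gapPoly {f : Fin (l + 1) → ℕ}
    (hf : StrictMono f) : X ^ (tableauPoly a f).natTrailingDegree ∣ gapPoly a f := by
  induction l generalizing a with
  | zero =>
    have hone : tableauPoly a f = 1 := by simp [tableauPoly, tableauMatrix_zero]
    simp [hone]
  | succ l ih =>
    rw [gapPoly_succ_succ a hf.monotone, natTrailingDegree_tableauPoly_succ a hf]
    refine Finset.dvd_sum fun g hg => (pow_dvd_pow X (Finset.inf'_le _ hg)).trans ?_
    rw [pow_add]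
    exact mul_dvd_mul_left _ (ih (shiftDatum a) (strictMono_of_mem_interlacing hf.monotone hg))

end TableauPolynomial

section Tableau

variable {l : ℕ}

/-- A tableau with diagonal `f`, generalizing `IsKTab` to an arbitrary sequence. Rows and columns
of `c` are indexed from `1` and those of `f` from `0`; `c` is unconstrained off `1 ≤ p ≤ q ≤ l`. -/
structure IsTableau (f : Fin l → ℕ) (c : ℕ → ℕ → ℤ) : Prop where
  diag : ∀ p : Fin l, c (p + 1) (p + 1) = f p
  le_right : ∀ p q : ℕ, 1 ≤ p → p ≤ q → q + 1 ≤ l → c p q ≤ c p (q + 1)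
  lt_below : ∀ p q : ℕ, 1 ≤ p → p + 1 ≤ q → q ≤ l → c p q < c (p + 1) q

/-- The weight `∑ a (c p q) (c p q + (q - p))` over `1 ≤ p < q ≤ l` of a tableau `c` of size
`l`. -/
def tableauSum (a : ℤ → ℤ → ℤ) (l : ℕ) (c : ℕ → ℕ → ℤ) : ℤ :=
  ∑ p ∈ Finset.Icc 1 l, ∑ q ∈ Finset.Icc (p + 1) l, a (c p q) (c p q + ((q : ℤ) - (p : ℤ)))

/-- The weights of all tableaux with diagonal `f`. -/
def tableauSums (a : ℤ → ℤ → ℤ) (f : Fin l → ℕ) : Set ℤ :=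
  {z | ∃ c, IsTableau f c ∧ z = tableauSum a l c}

theorem IsTableau.congr {f : Fin l → ℕ} {c c' : ℕ → ℕ → ℤ} (hc : IsTableau f c)
    (h : ∀ p q, p ≤ q → c p q = c' p q) : IsTableau f c' where
  diag p := (h _ _ le_rfl).symm.trans (hc.diag p)
  le_right p q hp hpq hq := by
    simpa only [h p q hpq, h p (q + 1) (by omega)] using hc.le_right p q hp hpq hq
  lt_below p q hp hpq hq := by
    simpa only [h p q (by omega), h (p + 1) q hpq] using hc.lt_below p q hp hpq hq

theorem tableauSum_congr (a : ℤ → ℤ → ℤ) (l : ℕ) {c c' : ℕ → ℕ → ℤ}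
    (h : ∀ p q, p ≤ q → c p q = c' p q) : tableauSum a l c = tableauSum a l c' := by
  refine Finset.sum_congr rfl fun p _ => Finset.sum_congr rfl fun q hq => ?_
  rw [h p q (by rw [Finset.mem_Icc] at hq; omega)]

theorem IsTableau.exists_mem_interlacing {f : Fin (l + 1) → ℕ} {c : ℕ → ℕ → ℤ}
    (hc : IsTableau f c) : ∃ g ∈ interlacing f, IsTableau g fun p q => c p (q + 1) := by
  have hle (p : Fin l) : (f p.castSucc : ℤ) ≤ c (p + 1) (p + 2) :=
    (hc.diag p.castSucc).symm.trans_le (hc.le_right (p + 1) (p + 1) (by omega) le_rfl (by omega))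
  have hlt (p : Fin l) : c (p + 1) (p + 2) < (f p.succ : ℤ) :=
    (hc.lt_below (p + 1) (p + 2) (by omega) le_rfl (by omega)).trans_eq (hc.diag p.succ)
  refine ⟨fun p => (c (p + 1) (p + 2)).toNat, mem_interlacing.2 fun p => ?_, ?_, ?_, ?_⟩
  · have := hle p
    have := hlt p
    omega
  · exact fun p => (Int.toNat_of_nonneg ((Int.natCast_nonneg _).trans (hle p))).symm
  · exact fun p q hp hpq hq => hc.le_right p (q + 1) hp (by omega) (by omega)
  · exact fun p q hp hpq hq => hc.lt_below p (q + 1) hp (by omega) (by omega)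

theorem isTableau_of_mem_interlacing {f : Fin (l + 1) → ℕ} {g : Fin l → ℕ} {c : ℕ → ℕ → ℤ}
    (hdiag : ∀ p : Fin (l + 1), c (p + 1) (p + 1) = f p) (hg : g ∈ interlacing f)
    (hc : IsTableau g fun p q => c p (q + 1)) : IsTableau f c where
  diag := hdiag
  le_right p q hp hpq hq := by
    rcases hpq.eq_or_lt with rfl | hpq
    · obtain ⟨p, rfl⟩ := Nat.exists_eq_add_of_le' hp
      let i : Fin l := ⟨p, by omega⟩
      calc c (i.castSucc + 1) (i.castSucc + 1) = f i.castSucc := hdiag i.castSucc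
        _ ≤ g i := by exact_mod_cast (mem_interlacing.1 hg i).1
        _ = c (i + 1) (i + 2) := (hc.diag i).symm
    · obtain ⟨q, rfl⟩ := Nat.exists_eq_add_of_le' (hp.trans hpq.le)
      exact hc.le_right p q hp (by omega) (by omega)
  lt_below p q hp hpq hq := by
    rcases hpq.eq_or_lt with rfl | hpq
    · obtain ⟨p, rfl⟩ := Nat.exists_eq_add_of_le' hp
      let i : Fin l := ⟨p, by omega⟩
      calc c (i + 1) (i + 2) = g i := hc.diag i
        _ < f i.succ := by exact_mod_cast (mem_interlacing.1 hg i).2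
        _ = c (i.succ + 1) (i.succ + 1) := by rw [hdiag i.succ]
    · obtain ⟨q, rfl⟩ := Nat.exists_eq_add_of_le' (show 1 ≤ q by omega)
      exact hc.lt_below p q hp (by omega) (by omega)

theorem exists_diag_eq_and_tail_eq (f : Fin (l + 1) → ℕ) (c' : ℕ → ℕ → ℤ) :
    ∃ c : ℕ → ℕ → ℤ, (∀ p : Fin (l + 1), c (p + 1) (p + 1) = f p) ∧
      ∀ p q, p ≤ q → c' p q = c p (q + 1) := by
  refine ⟨fun p q => if q = p then f (Fin.ofNat (l + 1) (p - 1)) else c' p (q - 1), ?_, ?_⟩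
  · simp
  · intro p q hpq
    simp [show q + 1 ≠ p by omega]

theorem tableauSum_succ (a : ℤ → ℤ → ℤ) {g : Fin l → ℕ} {c : ℕ → ℕ → ℤ}
    (hc : ∀ p : Fin l, c (p + 1) (p + 2) = g p) :
    tableauSum a (l + 1) c = ∑ p, a (g p) (g p + 1) +
      tableauSum (shiftDatum a) l fun p q => c p (q + 1) := by
  have hfirst : ∑ p, a (g p) (g p + 1) =
      ∑ p ∈ Finset.Icc 1 l, a (c p (p + 1)) (c p (p + 1) + 1) := by
    rw [← Finset.Ico_add_one_right_eq_Icc, Finset.sum_Ico_eq_sum_range, Finset.sum_range]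
    exact Finset.sum_congr rfl fun p _ => by rw [← hc p, add_comm 1]
  have hrow (p : ℕ) (hp : p ≤ l) :
      ∑ q ∈ Finset.Icc (p + 1) (l + 1), a (c p q) (c p q + ((q : ℤ) - p)) =
        a (c p (p + 1)) (c p (p + 1) + 1) +
          ∑ q ∈ Finset.Icc (p + 1) l,
            shiftDatum a (c p (q + 1)) (c p (q + 1) + ((q : ℤ) - p)) := by
    simp only [← Finset.Ico_add_one_right_eq_Icc]
    rw [Finset.sum_eq_sum_Ico_succ_bot (by omega), ← Finset.sum_Ico_add']
    simp only [shiftDatum, Nat.cast_add, Nat.cast_one, add_sub_cancel_left, add_sub_right_comm,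
      add_assoc]
  rw [hfirst, tableauSum, Finset.sum_Icc_succ_top (by omega),
    Finset.Icc_eq_empty (a := l + 1 + 1) (by omega), Finset.sum_empty, add_zero, tableauSum,
    ← Finset.sum_add_distrib]
  exact Finset.sum_congr rfl fun p hp => hrow p (Finset.mem_Icc.1 hp).2

theorem tableauSums_succ (a : ℤ → ℤ → ℤ) (f : Fin (l + 1) → ℕ) :
    tableauSums a f = ⋃ g ∈ interlacing f,
      (∑ p, a (g p) (g p + 1) + ·) '' tableauSums (shiftDatum a) g := by
  ext z
  simp only [Set.mem_iUnion, Set.mem_image, exists_prop]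
  constructor
  · rintro ⟨c, hc, rfl⟩
    obtain ⟨g, hg, htail⟩ := hc.exists_mem_interlacing
    exact ⟨g, hg, _, ⟨_, htail, rfl⟩, (tableauSum_succ a htail.diag).symm⟩
  · rintro ⟨g, hg, _, ⟨c', hc', rfl⟩, rfl⟩
    obtain ⟨c, hdiag, htail⟩ := exists_diag_eq_and_tail_eq f c'
    have hc := hc'.congr htail
    refine ⟨c, isTableau_of_mem_interlacing hdiag hg hc, ?_⟩
    rw [tableauSum_succ a hc.diag, tableauSum_congr _ _ htail]

theorem isLeast_biUnion_inf' {ι α : Type*} [LinearOrder α] {s : Finset ι} (hs : s.Nonempty)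
    {S : ι → Set α} {m : ι → α} (h : ∀ i ∈ s, IsLeast (S i) (m i)) :
    IsLeast (⋃ i ∈ s, S i) (s.inf' hs m) := by
  obtain ⟨i, hi, hmin⟩ := s.exists_mem_eq_inf' hs m
  refine ⟨Set.mem_biUnion hi (hmin ▸ (h i hi).1), fun z hz => ?_⟩
  obtain ⟨j, hj, hzj⟩ := Set.mem_iUnion₂.1 hz
  exact (s.inf'_le m hj).trans ((h j hj).2 hzj)

theorem isLeast_tableauSums {a : ℤ → ℤ → ℤ} (ha : ∀ x y, 0 ≤ a x y) {f : Fin l → ℕ}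
    (hf : StrictMono f) :
    IsLeast (tableauSums a f) ((tableauPoly a f).natTrailingDegree : ℤ) := by
  induction l generalizing a with
  | zero =>
    have h_empty : IsTableau f fun _ _ => 0 := ⟨fun p => p.elim0, by omega, by omega⟩
    have h_zero : tableauSums a f = {0} := by
      ext z
      exact ⟨fun ⟨_, _, hz⟩ => hz, fun hz => ⟨_, h_empty, hz⟩⟩
    simp [h_zero, tableauPoly]
  | succ l ih =>
    rw [tableauSums_succ, natTrailingDegree_tableauPoly_succ a hf, Nat.cast_finsetInf']
    refine isLeast_biUnion_inf' _ fun g hg => ?_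
    have hdegree : (diagonalDegree a g : ℤ) = ∑ p, a (g p) (g p + 1) := by
      simp [diagonalDegree, ha]
    have hmono : Monotone (∑ p, a (g p) (g p + 1) + · : ℤ → ℤ) :=
      fun _ _ h => add_le_add_right h _
    have hg_least := hmono.map_isLeast
      (ih (a := shiftDatum a) (fun _ _ => ha _ _)
        (strictMono_of_mem_interlacing hf.monotone hg))
    simpa only [Nat.cast_add, hdegree] using hg_least

end Tableau

section MinTableauSum

open Polynomial

theorem isKTab_iff_isTableau {K : Finset ℕ} {c : ℕ → ℕ → ℤ} :
    IsKTab K c ↔ IsTableau (K.orderEmbOfFin rfl) c := by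
  refine ⟨fun ⟨hdiag, hle, hlt⟩ => ⟨fun p => ?_, hle, hlt⟩,
    fun ⟨hdiag, hle, hlt⟩ => ⟨fun p hp hpK => ?_, hle, hlt⟩⟩
  · rw [hdiag (p + 1) (by omega) (by omega), kth_add_one K rfl]
  · obtain ⟨p, rfl⟩ := Nat.exists_eq_add_of_le' hp
    let i : Fin K.card := ⟨p, by omega⟩
    rw [kth_add_one K rfl i]
    exact hdiag i

theorem flagMinor_tableauMatrix (a : ℤ → ℤ → ℤ) {K : Finset ℕ} {l : ℕ} (hK : K.card = l) :
    flagMinor (tableauMatrix (datumWeight a)) K = tableauPoly a (K.orderEmbOfFin hK) := by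
  have hS : (Finset.range K.card).card = l := by rw [Finset.card_range, hK]
  have hrows : Fin.val = (Finset.range K.card).orderEmbOfFin hS :=
    Finset.orderEmbOfFin_unique _ (by simp [hK]) Fin.val_strictMono
  rw [flagMinor, minor_eq_det _ hS hK, tableauPoly, hrows]

theorem gapMinor_tableauMatrix (a : ℤ → ℤ → ℤ) {K : Finset ℕ} {l : ℕ} (hK : K.card = l + 1) :
    gapMinor (tableauMatrix (datumWeight a)) K = gapPoly a (K.orderEmbOfFin hK) := by
  have hS : (insert K.card (Finset.range (K.card - 1))).card = l + 1 := by
    rw [Finset.card_insert_of_notMem (by simp), Finset.card_range, hK, Nat.add_sub_cancel]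
  have hrows : gapRows (l + 1) = (insert K.card (Finset.range (K.card - 1))).orderEmbOfFin hS := by
    refine Finset.orderEmbOfFin_unique _ (fun i => ?_) fun i j hij => ?_
    · simp only [gapRows, hK, Finset.mem_insert, Finset.mem_range]
      split_ifs <;> omega
    · simp only [gapRows]
      split_ifs <;> omega
  rw [gapMinor, minor_eq_det _ hS hK, gapPoly, hrows]

theorem trailingCoeff_flagMinor_tableauMatrix_pos (a : ℤ → ℤ → ℤ) (K : Finset ℕ) :
    0 < (flagMinor (tableauMatrix (datumWeight a)) K).trailingCoeff := by
  rw [flagMinor_tableauMatrix a rfl]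
  exact trailingCoeff_tableauPoly_pos a (K.orderEmbOfFin rfl).strictMono

theorem X_pow_natTrailingDegree_flagMinor_dvd_gapMinor (a : ℤ → ℤ → ℤ) {K : Finset ℕ}
    (hK : K.Nonempty) :
    X ^ (flagMinor (tableauMatrix (datumWeight a)) K).natTrailingDegree ∣
      gapMinor (tableauMatrix (datumWeight a)) K := by
  obtain ⟨l, hl⟩ := Nat.exists_eq_add_of_le' hK.card_pos
  rw [flagMinor_tableauMatrix a hl, gapMinor_tableauMatrix a hl]
  exact X_pow_natTrailingDegree_tableauPoly_dvd_gapPoly a (K.orderEmbOfFin hl).strictMono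

/-- The minimum of `tabSum a K` over all `K`-tableaux, the second summand of `MK`. As an `sInf` in
`ℤ` it is meaningful because tableaux exist and nonnegative data have nonnegative sums. -/
noncomputable def minTabSum (a : ℤ → ℤ → ℤ) (K : Finset ℕ) : ℤ :=
  sInf {z : ℤ | ∃ c : ℕ → ℕ → ℤ, IsKTab K c ∧ z = tabSum a K c}

variable {a : ℤ → ℤ → ℤ} {K : Finset ℕ}

theorem isLeast_natTrailingDegree_flagMinor (ha : ∀ x y, 0 ≤ a x y)
    (K : Finset ℕ) :
    IsLeast {z : ℤ | ∃ c : ℕ → ℕ → ℤ, IsKTab K c ∧ z = tabSum a K c}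
      (flagMinor (tableauMatrix (datumWeight a)) K).natTrailingDegree := by
  simp only [isKTab_iff_isTableau, flagMinor_tableauMatrix a rfl]
  exact isLeast_tableauSums ha (K.orderEmbOfFin rfl).strictMono

theorem minTabSum_eq_natTrailingDegree (ha : ∀ x y, 0 ≤ a x y) (K : Finset ℕ) :
    minTabSum a K = (flagMinor (tableauMatrix (datumWeight a)) K).natTrailingDegree :=
  (isLeast_natTrailingDegree_flagMinor ha K).csInf_eq

theorem exists_isKTab_tabSum_eq_minTabSum (ha : ∀ x y, 0 ≤ a x y)
    (K : Finset ℕ) : ∃ c, IsKTab K c ∧ minTabSum a K = tabSum a K c := by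
  rw [minTabSum_eq_natTrailingDegree ha]
  exact (isLeast_natTrailingDegree_flagMinor ha K).1

theorem minTabSum_insert_add_minTabSum_insert_le_of_lt (ha : ∀ x y, 0 ≤ a x y)
    {i j : ℕ} (hi : i ∉ K) (hj : j ∉ K) (hij : i < j) :
    minTabSum a (insert i K) + minTabSum a (insert j K) ≤
      minTabSum a (insert i (insert j K)) + minTabSum a K := by
  let P := flagMinor (tableauMatrix (datumWeight a))
  have hpos := trailingCoeff_flagMinor_tableauMatrix_pos a
  have hne : P K * P (insert i (insert j K)) ≠ 0 :=
    mul_ne_zero (ne_zero_of_trailingCoeff_pos (hpos _)) (ne_zero_of_trailingCoeff_pos (hpos _))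
  have hgap (x : ℕ) := X_pow_natTrailingDegree_flagMinor_dvd_gapMinor a (K.insert_nonempty x)
  have hdvd : X ^ ((P (insert i K)).natTrailingDegree + (P (insert j K)).natTrailingDegree) ∣
      P K * P (insert i (insert j K)) := by
    rw [flagMinor_mul_flagMinor_insert_insert _ (ne_zero_of_trailingCoeff_pos (hpos _)) hi hj hij]
    refine dvd_sub ?_ ?_
    · rw [pow_add]
      exact mul_dvd_mul (X_pow_natTrailingDegree_dvd _) (hgap j)
    · rw [add_comm, pow_add]
      exact mul_dvd_mul (X_pow_natTrailingDegree_dvd _) (hgap i)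
  have hle := le_natTrailingDegree hne fun d => X_pow_dvd_iff.1 hdvd d
  rw [natTrailingDegree_mul_of_trailingCoeff_pos (hpos _) (hpos _)] at hle
  rw [add_comm (minTabSum a (insert i (insert j K)))]
  simp only [minTabSum_eq_natTrailingDegree ha]
  exact_mod_cast hle

theorem minTabSum_insert_add_minTabSum_insert_le (ha : ∀ x y, 0 ≤ a x y)
    {i j : ℕ} (hi : i ∉ K) (hj : j ∉ K) (hij : i ≠ j) :
    minTabSum a (insert i K) + minTabSum a (insert j K) ≤
      minTabSum a (insert i (insert j K)) + minTabSum a K := by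
  rcases hij.lt_or_gt with hij | hji
  · exact minTabSum_insert_add_minTabSum_insert_le_of_lt ha hi hj hij
  · rw [Finset.insert_comm, add_comm (minTabSum a (insert i K))]
    exact minTabSum_insert_add_minTabSum_insert_le_of_lt ha hj hi hji

theorem minTabSum_three_term (ha : ∀ x y, 0 ≤ a x y) {i j k : ℕ}
    (hi : i ∉ K) (hj : j ∉ K) (hk : k ∉ K) (hij : i < j) (hjk : j < k) :
    minTabSum a (insert i (insert k K)) + minTabSum a (insert j K) =
      min (minTabSum a (insert i (insert j K)) + minTabSum a (insert k K))
        (minTabSum a (insert j (insert k K)) + minTabSum a (insert i K)) := by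
  have hpos := trailingCoeff_flagMinor_tableauMatrix_pos a
  have h := congrArg natTrailingDegree
    (flagMinor_three_term _ (ne_zero_of_trailingCoeff_pos (hpos K)) hi hj hk hij hjk)
  rw [natTrailingDegree_add_of_trailingCoeff_pos (trailingCoeff_mul_pos (hpos _) (hpos _))
      (trailingCoeff_mul_pos (hpos _) (hpos _))] at h
  simp only [natTrailingDegree_mul_of_trailingCoeff_pos (hpos _) (hpos _)] at h
  simp only [minTabSum_eq_natTrailingDegree ha]
  exact_mod_cast h

end MinTableauSum

section InitialInterval

theorem IsKTab.kth_le {K : Finset ℕ} {c : ℕ → ℕ → ℤ} (hc : IsKTab K c) {p q : ℕ} (hp : 1 ≤ p)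
    (hpq : p ≤ q) (hq : q ≤ K.card) : kth K p ≤ c p q := by
  induction q, hpq using Nat.le_induction with
  | base => exact (hc.1 p hp hq).ge
  | succ q hpq ih => exact (ih (by omega)).trans (hc.2.1 p q hp hpq hq)

theorem IsKTab.add_sub_le_kth {K : Finset ℕ} {c : ℕ → ℕ → ℤ} (hc : IsKTab K c) {p q : ℕ}
    (hp : 1 ≤ p) (hpq : p ≤ q) (hq : q ≤ K.card) : c p q + (q - p) ≤ kth K q := by
  induction hpq using Nat.decreasingInduction with
  | self => simp [hc.1 q hp hq]
  | of_succ p hpq ih =>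
    have := ih (by omega)
    have := hc.2.2 p q hp hpq hq
    push_cast at *
    linarith

theorem kth_Icc {m p : ℕ} (hp : 1 ≤ p) (hpm : p ≤ m) : kth (Finset.Icc 1 m) p = p := by
  obtain ⟨p, rfl⟩ := Nat.exists_eq_add_of_le' hp
  have hcard : (Finset.Icc 1 m).card = m := by simp
  have hemb : (fun i : Fin m => (i : ℕ) + 1) = (Finset.Icc 1 m).orderEmbOfFin hcard :=
    Finset.orderEmbOfFin_unique _ (by simp) fun i j hij => by simpa using hij
  exact (kth_add_one _ hcard ⟨p, hpm⟩).trans (congrFun hemb _).symm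

theorem IsKTab.eq_of_Icc {m : ℕ} {c : ℕ → ℕ → ℤ} (hc : IsKTab (Finset.Icc 1 m) c) {p q : ℕ}
    (hp : 1 ≤ p) (hpq : p ≤ q) (hq : q ≤ m) : c p q = p := by
  have hcard : q ≤ (Finset.Icc 1 m).card := by simpa using hq
  have hle := hc.kth_le hp hpq hcard
  have hge := hc.add_sub_le_kth hp hpq hcard
  rw [kth_Icc (by omega) (by omega)] at hle hge
  linarith

theorem IsKTab.tabSum_Icc (a : ℤ → ℤ → ℤ) {m : ℕ} {c : ℕ → ℕ → ℤ}
    (hc : IsKTab (Finset.Icc 1 m) c) :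
    tabSum a (Finset.Icc 1 m) c =
      ∑ k ∈ Finset.Icc 1 m, ∑ s ∈ Finset.Icc 1 (k - 1), a (s : ℤ) (k : ℤ) := by
  simp only [tabSum, Nat.card_Icc, Nat.add_sub_cancel]
  rw [Finset.sum_comm' (s' := fun q => Finset.Icc 1 (q - 1)) (t' := Finset.Icc 1 m)
    (by simp only [Finset.mem_Icc]; omega)]
  refine Finset.sum_congr rfl fun q hq => Finset.sum_congr rfl fun p hp => ?_
  rw [Finset.mem_Icc] at hp hq
  rw [hc.eq_of_Icc hp.1 (by omega) hq.2, add_sub_cancel]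

variable {a : ℤ → ℤ → ℤ}

theorem minTabSum_Icc (ha : ∀ x y, 0 ≤ a x y) (m : ℕ) :
    minTabSum a (Finset.Icc 1 m) =
      ∑ k ∈ Finset.Icc 1 m, ∑ s ∈ Finset.Icc 1 (k - 1), a (s : ℤ) (k : ℤ) := by
  obtain ⟨c, hc, hmin⟩ := exists_isKTab_tabSum_eq_minTabSum ha (Finset.Icc 1 m)
  rw [hmin, hc.tabSum_Icc a]

theorem MK_eq (n : ℕ) (ha : ∀ x y, 0 ≤ a x y) (K : Finset ℕ) :
    MK n a K = -(∑ k ∈ K, ∑ s ∈ Finset.Icc 1 (k - 1), a (s : ℤ) (k : ℤ)) + minTabSum a K := by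
  rw [MK]
  split_ifs with h
  · rcases h with rfl | rfl
    · simpa using (minTabSum_Icc ha 0).symm
    · rw [minTabSum_Icc ha, neg_add_cancel]
  · rfl

theorem MK_Icc (n : ℕ) (ha : ∀ x y, 0 ≤ a x y) (m : ℕ) : MK n a (Finset.Icc 1 m) = 0 := by
  rw [MK_eq n ha, minTabSum_Icc ha, neg_add_cancel]

end InitialInterval

/-- Berenstein–Fomin–Zelevinsky: for every Lusztig datum `a`, the collection
`M(a) = (M_K(a))_{K ∈ M_n^×}` is an `e`-BZ datum: it satisfies `M_{[1,i]}(a) = 0` for all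
`1 ≤ i ≤ n`, the inequalities (BZ-1)', and the 3-term relations (BZ-2)'. -/
theorem stmt9 (n : ℕ) (hn : 1 ≤ n) (a : ℤ → ℤ → ℤ) (ha : IsLusztig n a) :
    IsEBZ n (MK n a) := by
  have hMK := MK_eq n ha.1
  refine ⟨⟨MK_Icc n ha.1 0, MK_Icc n ha.1 (n + 1), ?_, ?_⟩, fun i _ _ => MK_Icc n ha.1 i⟩
  · intro i j K _ _ _ _ hij _ hi hj
    have hBZ1 := minTabSum_insert_add_minTabSum_insert_le ha.1 hi hj hij
    have hijK : i ∉ insert j K := by simp [hi, hij]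
    simp only [hMK, Finset.sum_insert, hi, hj, hijK, not_false_eq_true]
    linarith
  · intro i j k K _ hij hjk _ _ hi hj hk
    have hBZ2 := minTabSum_three_term ha.1 hi hj hk hij hjk
    have hijK : i ∉ insert j K := by simp [hi, hij.ne]
    have hjkK : j ∉ insert k K := by simp [hj, hjk.ne]
    have hikK : i ∉ insert k K := by simp [hi, (hij.trans hjk).ne]
    simp only [hMK, Finset.sum_insert, hi, hj, hk, hijK, hjkK, hikK, not_false_eq_true]
    omega
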